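/- arXiv:2412.05673 — 3 statements merged into one kernel-verified Lean document; each statement's English description precedes it below -/
import Mathlib

section
/- For every α > 0 and every ε ∈ ℝ, the Gaussian–GIG mixture integral evaluates in closed form: ∫₀^∞ λ^{-1/2} · exp(−ε²/(2λ)) · exp(−((1+α²)λ + α²/λ)/2) dλ = (√(2π)/√(1+α²)) · exp(−√(1+α²) · √(α²+ε²)). In particular, if ε | λ ~ N(0, λ) and λ has the GIG(a = 1+α², b = α², p = 1) distribution, then the λ-marginalized density of ε is proportional (as a function of ε) to exp(−ℓ_{SPH,α}(ε)), the generalized density associated with the scaled pseudo-Huber loss. -/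
open MeasureTheory Real Set

/-- The scaled pseudo-Huber (SPH) loss. -/
noncomputable def lSPH (α t : ℝ) : ℝ :=
  α * Real.sqrt (α ^ 2 + 1) * (Real.sqrt (1 + t ^ 2 / α ^ 2) - 1)

/-!
The substitution `x = √(q / p) * exp t` turns `p * x - q / x` into a multiple of `sinh t` and
`dx` into a multiple of `exp t dt`. Against an even function of `sinh t`, the weight `exp t` may be
replaced by its even part `cosh t`, and `cosh t dt = d (sinh t)`. This yields the
Cauchy–Schlömilch formula `∫₀^∞ f (p * x - q / x) dx = (2 * p)⁻¹ ∫ f` for even `f`.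
Putting `l = x ^ 2` and completing the square, `p ^ 2 * x ^ 2 + q ^ 2 / x ^ 2 =
(p * x - q / x) ^ 2 + 2 * p * q`, reduces the mixture integral to the case of `f` a Gaussian.
-/

section ChangeOfVariables

variable {E : Type*} [NormedAddCommGroup E] [NormedSpace ℝ E] {f : ℝ → E}

theorem integral_exp_smul_comp_exp (f : ℝ → E) :
    ∫ t, exp t • f (exp t) = ∫ x in Ioi (0 : ℝ), f x := by
  have h := integral_image_eq_integral_abs_deriv_smul MeasurableSet.univ
    (fun t _ => (hasDerivAt_exp t).hasDerivWithinAt) exp_injective.injOn f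
  simpa only [image_univ, range_exp, abs_exp, setIntegral_univ] using h.symm

theorem integral_cosh_smul_comp_sinh (f : ℝ → E) :
    ∫ t, cosh t • f (sinh t) = ∫ y, f y := by
  have h := integral_image_eq_integral_abs_deriv_smul MeasurableSet.univ
    (fun t _ => (hasDerivAt_sinh t).hasDerivWithinAt) sinh_injective.injOn f
  simpa only [image_univ, sinh_surjective.range_eq, abs_of_pos (cosh_pos _), setIntegral_univ]
    using h.symm

theorem integrable_exp_smul_of_integrable_cosh_smul
    (hf : Integrable fun t => cosh t • f t) : Integrable fun t => exp t • f t := by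
  have h_bound (t : ℝ) : ‖exp t / cosh t‖ ≤ 2 := by
    rw [norm_of_nonneg (div_pos (exp_pos t) (cosh_pos t)).le, div_le_iff₀ (cosh_pos t), cosh_eq]
    linarith [exp_pos (-t)]
  have h_cont : Continuous fun t => exp t / cosh t :=
    continuous_exp.div continuous_cosh fun t => (cosh_pos t).ne'
  refine (hf.bdd_smul 2 h_cont.aestronglyMeasurable (ae_of_all _ h_bound)).congr
    (ae_of_all _ fun t => ?_)
  simp only [Pi.smul_apply', smul_smul, div_mul_cancel₀ _ (cosh_pos t).ne']

theorem integral_exp_smul_of_even (hf : f.Even) :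
    ∫ t, exp t • f t = ∫ t, cosh t • f t := by
  by_cases h_int : Integrable fun t => exp t • f t
  · have h_int_neg : Integrable fun t => exp (-t) • f t := by
      simpa only [hf _] using h_int.comp_neg
    have h_neg : ∫ t, exp (-t) • f t = ∫ t, exp t • f t := by
      simpa only [hf _] using integral_neg_eq_self (fun t => exp t • f t) volume
    calc ∫ t, exp t • f t
        = (2 : ℝ)⁻¹ • ((∫ t, exp t • f t) + ∫ t, exp (-t) • f t) := by
          rw [h_neg, ← two_smul ℝ, inv_smul_smul₀ two_ne_zero]
      _ = ∫ t, cosh t • f t := by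
          rw [← integral_add h_int h_int_neg, ← integral_smul]
          simp only [← add_smul, smul_smul, cosh_eq, div_eq_inv_mul]
  · rw [integral_undef h_int,
      integral_undef (mt integrable_exp_smul_of_integrable_cosh_smul h_int)]

theorem integral_exp_smul_comp_sinh (hf : f.Even) :
    ∫ t, exp t • f (sinh t) = ∫ y, f y := by
  have h_even : (fun t => f (sinh t)).Even := fun t => by
    simp only [sinh_neg, hf _]
  rw [integral_exp_smul_of_even h_even, integral_cosh_smul_comp_sinh]

theorem integral_comp_mul_sub_div_Ioi (hf : f.Even) {p q : ℝ} (hp : 0 < p) (hq : 0 < q) :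
    ∫ x in Ioi (0 : ℝ), f (p * x - q / x) = (2 * p)⁻¹ • ∫ y, f y := by
  obtain ⟨r, hr, hr_sq⟩ : ∃ r : ℝ, 0 < r ∧ r ^ 2 = q / p :=
    ⟨√(q / p), by positivity, sq_sqrt (by positivity)⟩
  have h_sinh (t : ℝ) : p * (r * exp t) - q / (r * exp t) = 2 * p * r * sinh t := by
    have hq_eq : q = p * r ^ 2 := by rw [hr_sq]; field_simp
    rw [hq_eq, sinh_eq, exp_neg]
    field_simp
  have h_even : (fun y => f (2 * p * r * y)).Even := fun y => by
    simp only [mul_neg, hf _]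
  calc ∫ x in Ioi (0 : ℝ), f (p * x - q / x)
      = r • ∫ x in Ioi (0 : ℝ), f (p * (r * x) - q / (r * x)) := by
        rw [integral_comp_mul_left_Ioi' (fun x => f (p * x - q / x)) 0 hr, mul_zero]
    _ = r • ∫ t, exp t • f (2 * p * r * sinh t) := by
        simp only [← integral_exp_smul_comp_exp, h_sinh]
    _ = r • ∫ y, f (2 * p * r * y) := by rw [integral_exp_smul_comp_sinh h_even]
    _ = (2 * p)⁻¹ • ∫ y, f y := by
        rw [Measure.integral_comp_mul_left, abs_of_pos (by positivity), smul_smul]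
        congr 1
        field_simp

end ChangeOfVariables

theorem integral_exp_neg_sq_mul_sub_div {p q : ℝ} (hp : 0 < p) (hq : 0 < q) :
    ∫ x in Ioi (0 : ℝ), exp (-(1 / 2) * (p * x - q / x) ^ 2) = √(2 * π) / (2 * p) := by
  have h_even : (fun y : ℝ => exp (-(1 / 2) * y ^ 2)).Even := fun y => by
    simp only [neg_sq]
  rw [integral_comp_mul_sub_div_Ioi h_even hp hq, integral_gaussian, smul_eq_mul,
    div_div_eq_mul_div, div_one, mul_comm π, inv_mul_eq_div]

theorem integral_rpow_neg_half_mul_exp_neg_add_div {a b : ℝ} (ha : 0 < a) (hb : 0 < b) :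
    ∫ l in Ioi (0 : ℝ), l ^ (-(1 : ℝ) / 2) * exp (-((a * l + b / l) / 2))
      = √(2 * π) / √a * exp (-(√a * √b)) := by
  have h_subst : ∀ x ∈ Ioi (0 : ℝ), ((2 : ℝ) * x ^ ((2 : ℝ) - 1)) •
      ((x ^ (2 : ℝ)) ^ (-(1 : ℝ) / 2) * exp (-((a * x ^ (2 : ℝ) + b / x ^ (2 : ℝ)) / 2)))
      = 2 * exp (-(√a * √b)) * exp (-(1 / 2) * (√a * x - √b / x) ^ 2) := by
    intro x (hx : 0 < x)
    have h_weight : x ^ ((2 : ℝ) - 1) * (x ^ (2 : ℝ)) ^ (-(1 : ℝ) / 2) = 1 := by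
      rw [← rpow_mul hx.le, ← rpow_add hx]
      norm_num
    have h_square : -((a * x ^ 2 + b / x ^ 2) / 2)
        = -(√a * √b) + -(1 / 2) * (√a * x - √b / x) ^ 2 := by
      rw [sub_sq, mul_pow, div_pow, sq_sqrt ha.le, sq_sqrt hb.le]
      field_simp
      ring
    rw [smul_eq_mul, mul_assoc, ← mul_assoc (x ^ _), h_weight, one_mul, rpow_two, h_square,
      exp_add, mul_assoc]
  rw [← integral_comp_rpow_Ioi_of_pos two_pos, setIntegral_congr_fun measurableSet_Ioi h_subst,
    integral_const_mul, integral_exp_neg_sq_mul_sub_div (sqrt_pos.2 ha) (sqrt_pos.2 hb)]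
  field_simp

theorem integral_gaussian_mul_gig {a b ε : ℝ} (ha : 0 < a) (hb : 0 < b + ε ^ 2) :
    ∫ l in Ioi (0 : ℝ), l ^ (-(1 : ℝ) / 2) * exp (-(ε ^ 2) / (2 * l)) *
        exp (-((a * l + b / l) / 2))
      = √(2 * π) / √a * exp (-(√a * √(b + ε ^ 2))) := by
  have h_exp (l : ℝ) : exp (-(ε ^ 2) / (2 * l)) * exp (-((a * l + b / l) / 2))
      = exp (-((a * l + (b + ε ^ 2) / l) / 2)) := by
    rw [← exp_add]
    ring_nf
  simp only [mul_assoc _ (exp _), h_exp]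
  exact integral_rpow_neg_half_mul_exp_neg_add_div ha hb

theorem lSPH_eq_sqrt_mul_sqrt_sub {α : ℝ} (hα : 0 < α) (t : ℝ) :
    lSPH α t = √(1 + α ^ 2) * (√(α ^ 2 + t ^ 2) - α) := by
  have h_sqrt : √(α ^ 2 + t ^ 2) = α * √(1 + t ^ 2 / α ^ 2) := by
    rw [← sqrt_sq hα.le, ← sqrt_mul (sq_nonneg _), sqrt_sq hα.le]
    field_simp
  rw [lSPH, h_sqrt, add_comm (α ^ 2)]
  ring

/-- For every `α > 0` and every `ε`, the Gaussian–GIG mixture integral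
evaluates in closed form, and in particular the `λ`-marginalized density of `ε` is
proportional (as a function of `ε`) to `exp (-lSPH α ε)`. -/
theorem gaussian_gig_mixture_closed_form (α : ℝ) (hα : 0 < α) :
    (∀ ε : ℝ,
      (∫ l in Ioi (0 : ℝ),
          l ^ (-(1 : ℝ) / 2) * Real.exp (-(ε ^ 2) / (2 * l)) *
            Real.exp (-(((1 + α ^ 2) * l + α ^ 2 / l) / 2)))
        = (Real.sqrt (2 * π) / Real.sqrt (1 + α ^ 2)) *
            Real.exp (-(Real.sqrt (1 + α ^ 2) * Real.sqrt (α ^ 2 + ε ^ 2)))) ∧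
    (∃ C : ℝ, 0 < C ∧ ∀ ε : ℝ,
      (∫ l in Ioi (0 : ℝ),
          l ^ (-(1 : ℝ) / 2) * Real.exp (-(ε ^ 2) / (2 * l)) *
            Real.exp (-(((1 + α ^ 2) * l + α ^ 2 / l) / 2)))
        = C * Real.exp (-(lSPH α ε))) := by
  have h_closed (ε : ℝ) := integral_gaussian_mul_gig (a := 1 + α ^ 2) (b := α ^ 2) (ε := ε)
    (by positivity) (by positivity)
  refine ⟨h_closed, √(2 * π) / √(1 + α ^ 2) * exp (-(√(1 + α ^ 2) * α)), by positivity,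
    fun ε => ?_⟩
  rw [h_closed, mul_assoc, ← exp_add, lSPH_eq_sqrt_mul_sqrt_sub hα]
  ring_nf
end

section
/- For all real a > 0 and b > 0, ∫₀^∞ x^{-1/2} · exp(−(a·x + b/x)/2) dx = √(2π/a) · exp(−√(a·b)). (This is the normalization identity for the GIG distribution with index p = 1/2, which underlies the full conditional distribution of each latent scale λᵢ in the Gibbs sampler, and shows that an exponential scale mixture of centered Gaussians has a Laplace-type marginal, so that ℓ₁ regression emerges from the hierarchy with λᵢ ~ Gamma(1,1).) -/
open MeasureTheory Real Set

/-!
Substituting `x = t ^ 2` and completing the square, `a t² + b / t² = (√a t - √b / t)² + 2 √(a b)`,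
turns the integrand into a Gaussian evaluated at `u = √a t - √b / t`. This map carries `(0, ∞)`
increasingly onto `ℝ` with derivative `√a + √b / t²`, and the involution `t ↦ √(b / a) / t` changes
its sign while exchanging the two summands of `(√a + √b / t²) dt`. For an even function of `u`
both summands therefore contribute equally to the integral over `ℝ`.
-/

/-- The map underlying the Cauchy–Schlömilch substitution `u = α t - β / t`, which for positive
`α` and `β` is an increasing bijection from `(0, ∞)` to `ℝ`; the value `0` at `t = 0` is junk. -/
noncomputable def cauchySchlomilch (α β t : ℝ) : ℝ := α * t - β / t

section CauchySchlomilch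

variable {α β t : ℝ}

lemma hasDerivAt_cauchySchlomilch (ht : t ≠ 0) :
    HasDerivAt (cauchySchlomilch α β) (α + β / t ^ 2) t := by
  have h := ((hasDerivAt_id' t).const_mul α).sub ((hasDerivAt_inv ht).const_mul β)
  exact h.congr_deriv (by ring)

lemma strictMonoOn_cauchySchlomilch (hα : 0 < α) (hβ : 0 ≤ β) :
    StrictMonoOn (cauchySchlomilch α β) (Ioi 0) := by
  intro x (hx : 0 < x) y _ hxy
  have h_mul : α * x < α * y := by gcongr
  have h_div : β / y ≤ β / x := by gcongr
  exact (sub_lt_sub_right h_mul _).trans_le (sub_le_sub_left h_div _)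

lemma image_cauchySchlomilch_Ioi (hα : 0 < α) (hβ : 0 < β) :
    cauchySchlomilch α β '' Ioi 0 = univ := by
  refine eq_univ_of_forall fun u ↦ ?_
  -- The preimage of `u` is the positive root of `α t² - u t - β`.
  set s := √(u ^ 2 + 4 * α * β)
  have hs : s ^ 2 = u ^ 2 + 4 * α * β := sq_sqrt (by positivity)
  have h_abs : |u| < s := abs_lt_of_sq_lt_sq (by rw [hs]; nlinarith [mul_pos hα hβ]) (sqrt_nonneg _)
  have h_pos : 0 < u + s := by linarith [neg_abs_le u]
  refine ⟨(u + s) / (2 * α), div_pos h_pos (by positivity), ?_⟩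
  rw [cauchySchlomilch]
  field_simp
  linear_combination hs

lemma cauchySchlomilch_div_div (hα : α ≠ 0) (hβ : β ≠ 0) (ht : t ≠ 0) :
    cauchySchlomilch α β (β / α / t) = -cauchySchlomilch α β t := by
  unfold cauchySchlomilch
  field_simp
  ring

lemma cauchySchlomilch_sq (ht : t ≠ 0) :
    cauchySchlomilch α β t ^ 2 = α ^ 2 * t ^ 2 + β ^ 2 / t ^ 2 - 2 * (α * β) := by
  unfold cauchySchlomilch
  field_simp
  ring

end CauchySchlomilch

section Substitution

variable {E : Type*} [NormedAddCommGroup E] [NormedSpace ℝ E] {α β : ℝ} {f : ℝ → E}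

lemma integral_Ioi_rpow_neg_half_smul (f : ℝ → E) :
    ∫ x in Ioi (0 : ℝ), x ^ (-(1 : ℝ) / 2) • f x = (2 : ℝ) • ∫ t in Ioi (0 : ℝ), f (t ^ 2) := by
  rw [← integral_comp_rpow_Ioi_of_pos two_pos, ← integral_smul]
  refine setIntegral_congr_fun measurableSet_Ioi fun t (ht : 0 < t) ↦ ?_
  have h_inv : (t ^ 2) ^ (-(1 : ℝ) / 2) = t⁻¹ := by
    rw [← rpow_natCast_mul ht.le, ← rpow_neg_one]
    norm_num
  have h_deriv : t ^ ((2 : ℝ) - 1) = t := by norm_num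
  simp only [rpow_two, h_inv, h_deriv, smul_smul, mul_assoc, mul_inv_cancel₀ ht.ne', mul_one]

lemma integral_Ioi_const_div_sq_smul_comp_const_div {c : ℝ} (hc : 0 < c) (f : ℝ → E) :
    ∫ t in Ioi 0, (c / t ^ 2) • f (c / t) = ∫ t in Ioi 0, f t := by
  have h_scale := integral_comp_mul_left_Ioi' f 0 hc
  rw [mul_zero, ← integral_comp_rpow_Ioi _ (neg_ne_zero.mpr one_ne_zero), ← integral_smul]
    at h_scale
  rw [← h_scale]
  refine setIntegral_congr_fun measurableSet_Ioi fun t (ht : 0 < t) ↦ ?_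
  have h_deriv : t ^ (-1 - 1 : ℝ) = (t ^ 2)⁻¹ := by
    rw [← rpow_two, ← rpow_neg ht.le]
    norm_num
  simp only [h_deriv, rpow_neg_one, abs_neg, abs_one, one_mul, smul_smul, div_eq_mul_inv]

lemma integral_Ioi_deriv_smul_comp_cauchySchlomilch (hα : 0 < α) (hβ : 0 < β) (f : ℝ → E) :
    ∫ t in Ioi 0, (α + β / t ^ 2) • f (cauchySchlomilch α β t) = ∫ u, f u := by
  rw [← integral_image_eq_integral_deriv_smul_of_monotoneOn measurableSet_Ioi
      (fun t ht ↦ (hasDerivAt_cauchySchlomilch (ne_of_gt ht)).hasDerivWithinAt)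
      (strictMonoOn_cauchySchlomilch hα hβ.le).monotoneOn,
    image_cauchySchlomilch_Ioi hα hβ, setIntegral_univ]

lemma integrableOn_Ioi_deriv_smul_comp_cauchySchlomilch (hα : 0 < α) (hβ : 0 ≤ β)
    (hf : Integrable f) :
    IntegrableOn (fun t ↦ (α + β / t ^ 2) • f (cauchySchlomilch α β t)) (Ioi 0) :=
  (integrableOn_image_iff_integrableOn_deriv_smul_of_monotoneOn measurableSet_Ioi
    (fun _ ht ↦ (hasDerivAt_cauchySchlomilch (ne_of_gt ht)).hasDerivWithinAt)
    (strictMonoOn_cauchySchlomilch hα hβ).monotoneOn f).mp hf.integrableOn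

lemma integrableOn_Ioi_comp_cauchySchlomilch (hα : 0 < α) (hβ : 0 ≤ β) (hf : Integrable f) :
    IntegrableOn (fun t ↦ f (cauchySchlomilch α β t)) (Ioi 0) := by
  have h_pos (t : ℝ) : 0 < α + β / t ^ 2 := by positivity
  have h_bound (t : ℝ) : ‖(α + β / t ^ 2)⁻¹‖ ≤ α⁻¹ := by
    rw [norm_of_nonneg (inv_pos.mpr (h_pos t)).le]
    exact inv_anti₀ hα (le_add_of_nonneg_right (by positivity))
  have h_meas : Measurable fun t : ℝ ↦ (α + β / t ^ 2)⁻¹ := by fun_prop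
  have h_cancel := (integrableOn_Ioi_deriv_smul_comp_cauchySchlomilch hα hβ hf).bdd_smul α⁻¹
    h_meas.aestronglyMeasurable (ae_of_all _ h_bound)
  exact h_cancel.congr (ae_of_all _ fun t ↦ inv_smul_smul₀ (h_pos t).ne' _)

lemma integral_Ioi_div_sq_smul_comp_cauchySchlomilch (hα : 0 < α) (hβ : 0 < β) (f : ℝ → E) :
    ∫ t in Ioi 0, (β / t ^ 2) • f (cauchySchlomilch α β t) =
      α • ∫ t in Ioi 0, f (-cauchySchlomilch α β t) := by
  rw [← integral_Ioi_const_div_sq_smul_comp_const_div (div_pos hβ hα)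
    (fun t ↦ f (-cauchySchlomilch α β t)), ← integral_smul]
  refine setIntegral_congr_fun measurableSet_Ioi fun t ht ↦ ?_
  have h_coeff : α * (β / α / t ^ 2) = β / t ^ 2 := by field_simp
  simp only [cauchySchlomilch_div_div hα.ne' hβ.ne' (ne_of_gt ht), neg_neg, smul_smul, h_coeff]

theorem integral_eq_smul_integral_Ioi_comp_cauchySchlomilch_add (hα : 0 < α) (hβ : 0 < β)
    (hf : Integrable f) :
    ∫ u, f u = α • ((∫ t in Ioi 0, f (cauchySchlomilch α β t)) +
      ∫ t in Ioi 0, f (-cauchySchlomilch α β t)) := by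
  have h_total := integrableOn_Ioi_deriv_smul_comp_cauchySchlomilch hα hβ.le hf
  have h_left := (integrableOn_Ioi_comp_cauchySchlomilch hα hβ.le hf).smul α
  rw [smul_add, ← integral_Ioi_div_sq_smul_comp_cauchySchlomilch hα hβ, ← sub_eq_iff_eq_add',
    ← integral_Ioi_deriv_smul_comp_cauchySchlomilch hα hβ, ← integral_smul]
  refine (integral_sub h_total h_left).symm.trans (integral_congr_ae (ae_of_all _ fun t ↦ ?_))
  simp only [Pi.smul_apply, ← sub_smul, add_sub_cancel_left]

end Substitution

lemma integral_Ioi_exp_neg_mul_cauchySchlomilch_sq {α β c : ℝ} (hα : 0 < α) (hβ : 0 < β)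
    (hc : 0 < c) :
    ∫ t in Ioi 0, exp (-c * cauchySchlomilch α β t ^ 2) = √(π / c) / (2 * α) := by
  have h := integral_eq_smul_integral_Ioi_comp_cauchySchlomilch_add hα hβ
    (integrable_exp_neg_mul_sq hc)
  simp only [neg_sq, integral_gaussian, smul_eq_mul] at h
  rw [h]
  field_simp
  ring

lemma exp_neg_mul_sq_add_div_sq {a b t : ℝ} (ha : 0 ≤ a) (hb : 0 ≤ b) (ht : t ≠ 0) :
    exp (-(a * t ^ 2 + b / t ^ 2) / 2) =
      exp (-√(a * b)) * exp (-(1 / 2) * cauchySchlomilch √a √b t ^ 2) := by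
  rw [← exp_add, cauchySchlomilch_sq ht, sq_sqrt ha, sq_sqrt hb, sqrt_mul ha]
  congr 1
  ring

/-- The normalization identity for the `GIG` distribution with
index `p = 1/2`: for all `a, b > 0`,
`∫₀^∞ x^(-1/2) exp(-(a x + b / x)/2) dx = √(2π/a) · exp(-√(a b))`. -/
theorem gig_half_normalization (a b : ℝ) (ha : 0 < a) (hb : 0 < b) :
    (∫ x in Ioi (0 : ℝ), x ^ (-(1 : ℝ) / 2) * Real.exp (-(a * x + b / x) / 2))
      = Real.sqrt (2 * π / a) * Real.exp (-Real.sqrt (a * b)) := by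
  have h_gauss := integral_Ioi_exp_neg_mul_cauchySchlomilch_sq (sqrt_pos.mpr ha) (sqrt_pos.mpr hb)
    one_half_pos
  calc ∫ x in Ioi (0 : ℝ), x ^ (-(1 : ℝ) / 2) * exp (-(a * x + b / x) / 2)
    _ = 2 * ∫ t in Ioi (0 : ℝ), exp (-(a * t ^ 2 + b / t ^ 2) / 2) :=
      integral_Ioi_rpow_neg_half_smul fun x ↦ exp (-(a * x + b / x) / 2)
    _ = 2 * ∫ t in Ioi (0 : ℝ),
          exp (-√(a * b)) * exp (-(1 / 2) * cauchySchlomilch √a √b t ^ 2) := by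
      congr 1
      exact setIntegral_congr_fun measurableSet_Ioi fun t ht ↦
        exp_neg_mul_sq_add_div_sq ha.le hb.le (ne_of_gt ht)
    _ = 2 * (exp (-√(a * b)) * (√(π / (1 / 2)) / (2 * √a))) := by
      rw [integral_const_mul, h_gauss]
    _ = √(2 * π / a) * exp (-√(a * b)) := by
      rw [show π / (1 / 2) = 2 * π by ring, sqrt_div (by positivity)]
      field_simp
end

section
/- For each α > 0 let Z(α) = ∫_ℝ exp(−ℓ_{SPH,α}(t)) dt, which is finite and positive, and let f_α(ε) = exp(−ℓ_{SPH,α}(ε))/Z(α) be the generalized error density associated with the SPH loss. Then for every fixed ε ∈ ℝ, f_α(ε) → (1/2)·exp(−|ε|) as α → 0⁺; that is, the SPH generalized density converges pointwise to the standard Laplace density as α tends to 0 from the right. -/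
open MeasureTheory Real Set Filter

/-!
As `α → 0⁺`, the form `√(α² + 1) (√(α² + t²) - α)` of the loss shows that it converges pointwise
to `|t|`, and that it is at least `|t| - α`. For `α < 1` the weights `exp (-ℓ_α)` are therefore
dominated by the integrable function `exp (-(|t| - 1))`, so that the normalizing constants converge
to `∫ exp (-|t|) = 2`.
-/

section ExpNeg

variable {X : Type*} [MeasurableSpace X] {μ : Measure X} {g : X → ℝ}

lemma integrable_exp_neg_of_ae_le {f : X → ℝ} (hg : Integrable (fun x ↦ exp (-g x)) μ)
    (hf : AEStronglyMeasurable f μ) (hgf : g ≤ᵐ[μ] f) :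
    Integrable (fun x ↦ exp (-f x)) μ := by
  refine hg.mono' (continuous_exp.comp_aestronglyMeasurable hf.neg) ?_
  filter_upwards [hgf] with x hx
  simpa using hx

lemma tendsto_integral_exp_neg_of_ae_le {ι : Type*} {l : Filter ι} [l.IsCountablyGenerated]
    {F : ι → X → ℝ} {f : X → ℝ} (hg : Integrable (fun x ↦ exp (-g x)) μ)
    (hF : ∀ᶠ i in l, AEStronglyMeasurable (F i) μ) (hgF : ∀ᶠ i in l, g ≤ᵐ[μ] F i)
    (hlim : ∀ᵐ x ∂μ, Tendsto (fun i ↦ F i x) l (nhds (f x))) :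
    Tendsto (fun i ↦ ∫ x, exp (-F i x) ∂μ) l (nhds (∫ x, exp (-f x) ∂μ)) := by
  refine tendsto_integral_filter_of_dominated_convergence (fun x ↦ exp (-g x)) ?_ ?_ hg ?_
  · filter_upwards [hF] with i hi
    exact continuous_exp.comp_aestronglyMeasurable hi.neg
  · filter_upwards [hgF] with i hi
    filter_upwards [hi] with x hx
    simpa using hx
  · filter_upwards [hlim] with x hx
    exact hx.neg.rexp

end ExpNeg

lemma integral_exp_neg_abs : ∫ t : ℝ, exp (-|t|) = 2 := by
  rw [integral_comp_abs (f := fun t ↦ exp (-t)), integral_exp_neg_Ioi_zero, mul_one]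

lemma integrable_exp_neg_abs_sub (c : ℝ) : Integrable (fun t : ℝ ↦ exp (-(|t| - c))) := by
  have h : Integrable (fun t : ℝ ↦ exp (-|t|)) :=
    .of_integral_ne_zero (integral_exp_neg_abs.trans_ne two_ne_zero)
  simpa only [← exp_add, ← sub_eq_add_neg, neg_sub] using h.const_mul (exp c)

lemma lSPH_eq_sqrt_mul_sub {α : ℝ} (hα : 0 < α) (t : ℝ) :
    lSPH α t = √(α ^ 2 + 1) * (√(α ^ 2 + t ^ 2) - α) := by
  have hsqrt : √(α ^ 2 + t ^ 2) = α * √(1 + t ^ 2 / α ^ 2) := by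
    rw [show α ^ 2 + t ^ 2 = α ^ 2 * (1 + t ^ 2 / α ^ 2) by field_simp,
      sqrt_mul (sq_nonneg α), sqrt_sq hα.le]
  rw [hsqrt, lSPH]
  ring

lemma continuous_lSPH (α : ℝ) : Continuous (lSPH α) := by
  unfold lSPH
  fun_prop

lemma abs_sub_le_lSPH {α : ℝ} (hα : 0 < α) (t : ℝ) : |t| - α ≤ lSPH α t := by
  have hfactor : 1 ≤ √(α ^ 2 + 1) := one_le_sqrt.2 (le_add_of_nonneg_left (sq_nonneg α))
  have hα_le : α ≤ √(α ^ 2 + t ^ 2) := le_sqrt_of_sq_le (le_add_of_nonneg_right (sq_nonneg t))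
  have ht_le : |t| ≤ √(α ^ 2 + t ^ 2) := abs_le_sqrt (le_add_of_nonneg_left (sq_nonneg α))
  calc |t| - α ≤ √(α ^ 2 + t ^ 2) - α := sub_le_sub_right ht_le α
    _ ≤ √(α ^ 2 + 1) * (√(α ^ 2 + t ^ 2) - α) :=
      le_mul_of_one_le_left (sub_nonneg.2 hα_le) hfactor
    _ = lSPH α t := (lSPH_eq_sqrt_mul_sub hα t).symm

lemma tendsto_lSPH_nhdsGT_zero (t : ℝ) :
    Tendsto (fun α ↦ lSPH α t) (nhdsWithin 0 (Ioi 0)) (nhds |t|) := by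
  have hcont : Continuous fun α : ℝ ↦ √(α ^ 2 + 1) * (√(α ^ 2 + t ^ 2) - α) := by fun_prop
  have hlim := hcont.tendsto' 0 |t| (by simp [sqrt_sq_eq_abs])
  refine (hlim.mono_left nhdsWithin_le_nhds).congr' ?_
  filter_upwards [self_mem_nhdsWithin] with α hα
  exact (lSPH_eq_sqrt_mul_sub hα t).symm

lemma integrable_exp_neg_lSPH {α : ℝ} (hα : 0 < α) : Integrable (fun t ↦ exp (-lSPH α t)) :=
  integrable_exp_neg_of_ae_le (integrable_exp_neg_abs_sub α)
    (continuous_lSPH α).aestronglyMeasurable (.of_forall (abs_sub_le_lSPH hα))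

lemma tendsto_integral_exp_neg_lSPH :
    Tendsto (fun α ↦ ∫ t, exp (-lSPH α t)) (nhdsWithin 0 (Ioi 0)) (nhds 2) := by
  rw [← integral_exp_neg_abs]
  refine tendsto_integral_exp_neg_of_ae_le (integrable_exp_neg_abs_sub 1)
    (.of_forall fun α ↦ (continuous_lSPH α).aestronglyMeasurable) ?_
    (.of_forall tendsto_lSPH_nhdsGT_zero)
  filter_upwards [Ioo_mem_nhdsGT zero_lt_one] with α hα
  exact .of_forall fun t ↦ (sub_le_sub_left hα.2.le |t|).trans (abs_sub_le_lSPH hα.1 t)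

/-- For each `α > 0` the SPH generalized density
`f_α(ε) = exp(-lSPH α ε) / Z(α)` (with `Z(α) = ∫ exp(-lSPH α t) dt` finite and positive)
converges pointwise, as `α → 0⁺`, to the standard Laplace density `(1/2) exp(-|ε|)`. -/
theorem sph_density_tendsto_laplace (ε : ℝ) :
    (∀ α : ℝ, 0 < α →
      Integrable (fun t : ℝ => Real.exp (-(lSPH α t))) ∧
        0 < ∫ t : ℝ, Real.exp (-(lSPH α t))) ∧
    Tendsto
      (fun α : ℝ => Real.exp (-(lSPH α ε)) / ∫ t : ℝ, Real.exp (-(lSPH α t)))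
      (nhdsWithin 0 (Ioi 0)) (nhds ((1 / 2) * Real.exp (-|ε|))) := by
  refine ⟨fun α hα ↦ ?_, ?_⟩
  · have hint := integrable_exp_neg_lSPH hα
    exact ⟨hint, integral_exp_pos hint⟩
  · rw [one_div_mul_eq_div]
    exact (tendsto_lSPH_nhdsGT_zero ε).neg.rexp.div tendsto_integral_exp_neg_lSPH two_ne_zero
end
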